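/- In the Coxeter group W of type E6, for all integers i with 1 ≤ i ≤ 4, the identity x'_{6,i} · x'_{5,i} = x5 · x'_{6,i} · x'_{5,i+1} holds. -/

import Mathlib

/-- The descending product `x i * x (i-1) * ... * x j` (equal to `1` when `j > i`). -/
def descProd {G : Type*} [Group G] (x : ℤ → G) (i j : ℤ) : G :=
  ((List.range (i + 1 - j).toNat).map (fun n => x (i - (n : ℤ)))).prod

/-- The product `x i * x (i-2) * x (i-3) * ... * x j`, with the conventions
`primProd x i (i-1) = x i` and `primProd x i j = 1` for `j ≥ i`. -/
def primProd {G : Type*} [Group G] (x : ℤ → G) (i j : ℤ) : G :=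
  if i ≤ j then 1 else x i * descProd x (i - 2) j

/-!
Consider a chain `x i, …, x k` of any length with a branch `e` attached to its top node `x k`, and
let `D j = x k ⋯ x j`. The heart of the matter is `D j * e * D j = e * D j * e * D (j + 1)`, by
downward induction on `j`. The base case is the braid relation of `e` and `x k`. In the step, the
first new letter `x j` slides right until it meets `x (j + 1)`, one braid move lets the induction
hypothesis apply, and `x j` slides back.
-/

section Products

variable {G : Type*} [Group G] (x : ℤ → G) {i j : ℤ}

-- `descProd` ranges over a `List ℤ`, obtained by coercing `List.range`; here the index is natural.
theorem descProd_eq_prod_map_range (i j : ℤ) :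
    descProd x i j = ((List.range (i + 1 - j).toNat).map fun n : ℕ => x (i - n)).prod := by
  simp [descProd, ← List.map_eq_flatMap, Function.comp_def]

theorem descProd_of_lt (h : i < j) : descProd x i j = 1 := by
  have hlen : (i + 1 - j).toNat = 0 := by lia
  simp [descProd_eq_prod_map_range, hlen]

theorem descProd_eq_mul_last (h : j ≤ i) :
    descProd x i j = descProd x i (j + 1) * x j := by
  have hlen : (i + 1 - j).toNat = (i + 1 - (j + 1)).toNat + 1 := by lia
  have hlast : i - ((i + 1 - (j + 1)).toNat : ℤ) = j := by lia
  rw [descProd_eq_prod_map_range, hlen, List.range_succ, List.map_append, List.prod_append,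
    List.map_singleton, List.prod_singleton, hlast, descProd_eq_prod_map_range]

theorem descProd_eq_first_mul (h : j ≤ i) :
    descProd x i j = x i * descProd x (i - 1) j := by
  have hlen : (i + 1 - j).toNat = (i - 1 + 1 - j).toNat + 1 := by lia
  have hshift (n : ℕ) : i - ((n + 1 : ℕ) : ℤ) = i - 1 - n := by lia
  simp only [descProd_eq_prod_map_range, hlen, List.range_succ_eq_map, List.map_cons, List.map_map,
    List.prod_cons, Function.comp_def, Nat.succ_eq_add_one, hshift, Nat.cast_zero, sub_zero]

theorem descProd_self (i : ℤ) : descProd x i i = x i := by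
  rw [descProd_eq_mul_last x le_rfl, descProd_of_lt x (lt_add_one i), one_mul]

variable {x} in
theorem commute_descProd {g : G} (h : ∀ l, j ≤ l → l ≤ i → Commute g (x l)) :
    Commute g (descProd x i j) := by
  rw [descProd_eq_prod_map_range]
  refine Commute.list_prod_right _ _ fun y hy => ?_
  obtain ⟨n, hn, rfl⟩ := List.mem_map.mp hy
  rw [List.mem_range] at hn
  exact h _ (by lia) (by lia)

theorem primProd_of_le (h : i ≤ j) : primProd x i j = 1 :=
  if_pos h

theorem primProd_of_lt (h : j < i) : primProd x i j = x i * descProd x (i - 2) j :=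
  if_neg h.not_ge

end Products

section Branch

variable {G : Type*} [Group G] {x : ℤ → G} {i k : ℤ}

theorem descProd_mul_mul_descProd {e : G}
    (hbraid : ∀ l, i ≤ l → l < k → x (l + 1) * x l * x (l + 1) = x l * x (l + 1) * x l)
    (hcomm : ∀ l j, i ≤ j → j + 1 < l → l ≤ k → Commute (x l) (x j))
    (hbranch : e * x k * e = x k * e * x k)
    (hbranch_comm : ∀ l, i ≤ l → l < k → Commute e (x l)) (hik : i ≤ k) :
    descProd x k i * e * descProd x k i = e * descProd x k i * e * descProd x k (i + 1) := by
  induction i, hik using Int.leInductionDown with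
  | base =>
    rw [descProd_self, descProd_of_lt x (lt_add_one k), mul_one, hbranch]
  | pred j hjk ih =>
    have ih := ih (fun l hl => hbraid l (by lia)) (fun l m hm => hcomm l m (by lia))
      (fun l hl => hbranch_comm l (by lia))
    have hD' : descProd x k j = descProd x k (j + 1) * x j := descProd_eq_mul_last x hjk
    have hD : descProd x k (j - 1) = descProd x k j * x (j - 1) := by
      simpa using descProd_eq_mul_last x (i := k) (j := j - 1) (by lia)
    have hbraid_last : x j * x (j - 1) * x j = x (j - 1) * x j * x (j - 1) := by
      simpa using hbraid (j - 1) le_rfl (by lia)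
    have hslide : Commute (x (j - 1)) (e * descProd x k (j + 1)) :=
      (hbranch_comm _ le_rfl (by lia)).symm.mul_right <|
        commute_descProd fun l hl hlk => (hcomm l (j - 1) le_rfl (by lia) hlk).symm
    rw [sub_add_cancel, hD]
    generalize x (j - 1) = a, x j = b, descProd x k (j + 1) = P at *
    generalize descProd x k j = D at *
    calc D * a * e * (D * a)
        = D * (a * (e * P)) * b * a := by simp only [hD', mul_assoc]
      _ = D * e * P * (a * b * a) := by simp only [hslide.eq, mul_assoc]
      _ = D * e * (P * b) * a * b := by simp only [← hbraid_last, mul_assoc]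
      _ = e * D * (e * P * a) * b := by simp only [← hD', ih, mul_assoc]
      _ = e * (D * a) * e * D := by simp only [← hslide.eq, hD', mul_assoc]

theorem descProd_mul_primProd
    (hbraid : ∀ l, i ≤ l → l < k → x (l + 1) * x l * x (l + 1) = x l * x (l + 1) * x l)
    (hcomm : ∀ l j, i ≤ j → j + 1 < l → l ≤ k → Commute (x l) (x j))
    (hbranch : x (k + 2) * x k * x (k + 2) = x k * x (k + 2) * x k)
    (hbranch_comm : ∀ l, i ≤ l → l < k → Commute (x (k + 2)) (x l)) (hik : i ≤ k + 1) :
    descProd x k i * primProd x (k + 2) i =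
      x (k + 2) * descProd x k i * primProd x (k + 2) (i + 1) := by
  rw [primProd_of_lt x (by lia), add_sub_cancel_right]
  obtain hik | rfl := Int.le_add_one_iff.mp hik
  · rw [primProd_of_lt x (by lia), add_sub_cancel_right, ← mul_assoc, ← mul_assoc,
      descProd_mul_mul_descProd hbraid hcomm hbranch hbranch_comm hik]
  · rw [primProd_of_le x (by lia), descProd_of_lt x (lt_add_one k), one_mul, mul_one, mul_one]

theorem E6_eta_general
    (hbraid : ∀ l, i ≤ l → l < k → x (l + 1) * x l * x (l + 1) = x l * x (l + 1) * x l)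
    (hcomm : ∀ l j, i ≤ j → j + 1 < l → l ≤ k → Commute (x l) (x j))
    (hbranch : x (k + 2) * x k * x (k + 2) = x k * x (k + 2) * x k)
    (hbranch_comm : ∀ l, i ≤ l → l < k → Commute (x (k + 2)) (x l))
    (hbranch_comm_next : Commute (x (k + 2)) (x (k + 1)))
    (hbranches_comm : Commute (x (k + 2)) (x (k + 3))) (hik : i ≤ k + 1) :
    primProd x (k + 3) i * primProd x (k + 2) i =
      x (k + 2) * primProd x (k + 3) i * primProd x (k + 2) (i + 1) := by
  have hfactor : primProd x (k + 3) i = x (k + 3) * x (k + 1) * descProd x k i := by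
    rw [primProd_of_lt x (by lia), show k + 3 - 2 = k + 1 by ring, descProd_eq_first_mul x hik,
      add_sub_cancel_right, mul_assoc]
  have hslide : Commute (x (k + 2)) (x (k + 3) * x (k + 1)) :=
    hbranches_comm.mul_right hbranch_comm_next
  calc primProd x (k + 3) i * primProd x (k + 2) i
      = x (k + 3) * x (k + 1) * (descProd x k i * primProd x (k + 2) i) := by
        rw [hfactor, mul_assoc]
    _ = x (k + 3) * x (k + 1) * x (k + 2) * (descProd x k i * primProd x (k + 2) (i + 1)) := by
        rw [descProd_mul_primProd hbraid hcomm hbranch hbranch_comm hik]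
        simp only [mul_assoc]
    _ = x (k + 2) * primProd x (k + 3) i * primProd x (k + 2) (i + 1) := by
        rw [← hslide.eq, hfactor]
        simp only [mul_assoc]

end Branch

theorem E6_eta (G : Type*) [Group G] (x : ℤ → G)
    (hsq : ∀ i : ℤ, 1 ≤ i → i ≤ 6 → x i ^ 2 = 1)
    (hbraid : ∀ i : ℤ, 1 ≤ i → i ≤ 3 → x (i+1) * x i * x (i+1) = x i * x (i+1) * x i)
    (h53 : x 5 * x 3 * x 5 = x 3 * x 5 * x 3)
    (h64 : x 6 * x 4 * x 6 = x 4 * x 6 * x 4)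
    (hcomm : ∀ i j : ℤ, 1 ≤ j → j + 1 < i → i ≤ 4 → x i * x j = x j * x i)
    (hcomm5 : ∀ i : ℤ, 1 ≤ i → i ≤ 6 → i ≠ 3 → i ≠ 5 → x 5 * x i = x i * x 5)
    (hcomm6 : ∀ i : ℤ, 1 ≤ i → i ≤ 6 → i ≠ 4 → i ≠ 6 → x 6 * x i = x i * x 6) :
    ∀ i : ℤ, 1 ≤ i → i ≤ 4 →
      primProd x 6 i * primProd x 5 i = x 5 * primProd x 6 i * primProd x 5 (i+1) := by
  intro i h1 h4
  exact E6_eta_general (k := 3) (fun l hl hl3 => hbraid l (by lia) (by lia))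
    (fun l j hj hjl hl3 => hcomm l j (by lia) hjl (by lia)) h53
    (fun l hl hl3 => hcomm5 l (by lia) (by lia) (by lia) (by lia))
    (hcomm5 4 (by lia) (by lia) (by lia) (by lia))
    (hcomm5 6 (by lia) (by lia) (by lia) (by lia)) h4
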